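/- Let 2 < a₀ ≤ a₁. There exists a constant K(a₀,a₁) > 0 such that for all β, β′ ∈ [a₀, a₁] with β ≠ β′, |E(β) − E(β′)| ≤ K(a₀,a₁)·|β − β′|·(1 + |log|β − β′||). -/

import Mathlib

/-- The orbit of `1` under the β-map `T_β(x) = βx mod 1`: `t₀ = 1`,
`t_{n+1} = β t_n − ⌊β t_n⌋`. -/
noncomputable def betaOrbit (β : ℝ) : ℕ → ℝ
  | 0 => 1
  | n + 1 => Int.fract (β * betaOrbit β n)

/-- `E(β) = (∑ t_n(β)²/(2βⁿ)) / (∑ t_n(β)/βⁿ)`, the expectation of the unique acim of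
the β-map. -/
noncomputable def Ebeta (β : ℝ) : ℝ :=
  (∑' n : ℕ, (betaOrbit β n) ^ 2 / (2 * β ^ n)) / (∑' n : ℕ, betaOrbit β n / β ^ n)

/-! The number `E(β)` is chosen so that `q(t) = t²/2 - E(β) t`, the primitive of `x - E(β)`,
satisfies `∑ q(T_βⁿ 1) / βⁿ = 0`. Hence `Ψ(t) = ∑ q(T_βⁿ t) / βⁿ` solves
`Ψ = q + β⁻¹ Ψ ∘ T_β` and vanishes at both `0` and `1`, so `Ψ ∘ fract` does not see the
discontinuities of `T_β`. Unroll the equation `n` times: an interval of length `δ` breaks into at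
most `2ⁿ` pieces, and each step costs `δ` in total because the factor `β⁻¹` compensates the
expansion. This bounds the variation of `Ψ ∘ fract` by `n δ + 4 (2/β)ⁿ`, and the choice
`n ≈ |log δ| / log (β/2)` gives `O(δ (1 + |log δ|))`. A resolvent identity for the operators
`Ψ ↦ β⁻¹ Ψ ∘ T_β` and `Ψ ↦ γ⁻¹ Ψ ∘ T_γ` transfers this modulus to `E(γ) - E(β)`. -/

open Set Function Real

/-- The discounted Birkhoff sum `∑ g(Tⁿ x) / βⁿ`, i.e. the resolvent of `g ↦ β⁻¹ g ∘ T` at `g`. -/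
noncomputable def discountedSum {X : Type*} (T : X → X) (g : X → ℝ) (β : ℝ) (x : X) : ℝ :=
  ∑' n : ℕ, g (T^[n] x) / β ^ n

section DiscountedSum

variable {X : Type*} {T : X → X} {s : Set X} {f g : X → ℝ} {β M N : ℝ} {x : X}

theorem norm_iterate_div_pow_le (hβ : 0 < β) (hT : MapsTo T s s) (hg : ∀ y ∈ s, |g y| ≤ M)
    (hx : x ∈ s) (n : ℕ) : ‖g (T^[n] x) / β ^ n‖ ≤ M * β⁻¹ ^ n := by
  rw [norm_div, norm_pow, norm_of_nonneg hβ.le, inv_pow, ← div_eq_mul_inv]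
  gcongr
  exact hg _ (hT.iterate n hx)

theorem hasSum_const_mul_inv_pow (hβ : 1 < β) (M : ℝ) :
    HasSum (fun n : ℕ ↦ M * β⁻¹ ^ n) (M / (1 - β⁻¹)) :=
  (hasSum_geometric_of_lt_one (by positivity) (inv_lt_one_of_one_lt₀ hβ)).mul_left M

theorem summable_iterate_div_pow (hβ : 1 < β) (hT : MapsTo T s s) (hg : ∀ y ∈ s, |g y| ≤ M)
    (hx : x ∈ s) : Summable fun n : ℕ ↦ g (T^[n] x) / β ^ n :=
  .of_norm_bounded (hasSum_const_mul_inv_pow hβ M).summable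
    (norm_iterate_div_pow_le (one_pos.trans hβ) hT hg hx)

theorem abs_discountedSum_le (hβ : 1 < β) (hT : MapsTo T s s) (hg : ∀ y ∈ s, |g y| ≤ M)
    (hx : x ∈ s) : |discountedSum T g β x| ≤ M / (1 - β⁻¹) :=
  tsum_of_norm_bounded (hasSum_const_mul_inv_pow hβ M)
    (norm_iterate_div_pow_le (one_pos.trans hβ) hT hg hx)

theorem abs_discountedSum_le_two_mul (hβ : 2 ≤ β) (hT : MapsTo T s s)
    (hg : ∀ y ∈ s, |g y| ≤ M) (hx : x ∈ s) : |discountedSum T g β x| ≤ 2 * M := by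
  have hM : 0 ≤ M := (abs_nonneg _).trans (hg x hx)
  have hβ' : β⁻¹ ≤ 2⁻¹ := inv_anti₀ two_pos hβ
  calc |discountedSum T g β x| ≤ M / (1 - β⁻¹) := abs_discountedSum_le (by linarith) hT hg hx
    _ ≤ M / 2⁻¹ := by gcongr; linarith
    _ = 2 * M := by ring

theorem discountedSum_nonneg (hβ : 0 ≤ β) (hT : MapsTo T s s) (hg : ∀ y ∈ s, 0 ≤ g y)
    (hx : x ∈ s) : 0 ≤ discountedSum T g β x :=
  tsum_nonneg fun n ↦ div_nonneg (hg _ (hT.iterate n hx)) (pow_nonneg hβ n)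

theorem discountedSum_congr (hT : MapsTo T s s) (hfg : EqOn f g s) (hx : x ∈ s) :
    discountedSum T f β x = discountedSum T g β x :=
  tsum_congr fun n ↦ by rw [hfg (hT.iterate n hx)]

theorem discountedSum_sub (hβ : 1 < β) (hT : MapsTo T s s) (hf : ∀ y ∈ s, |f y| ≤ M)
    (hg : ∀ y ∈ s, |g y| ≤ N) (hx : x ∈ s) :
    discountedSum T (fun y ↦ f y - g y) β x = discountedSum T f β x - discountedSum T g β x := by
  simp only [discountedSum, sub_div]
  exact (summable_iterate_div_pow hβ hT hf hx).tsum_sub (summable_iterate_div_pow hβ hT hg hx)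

theorem discountedSum_sub_const_mul (hβ : 1 < β) (hT : MapsTo T s s) (hf : ∀ y ∈ s, |f y| ≤ M)
    (hg : ∀ y ∈ s, |g y| ≤ N) (hx : x ∈ s) (c : ℝ) :
    discountedSum T (fun y ↦ f y - c * g y) β x =
      discountedSum T f β x - c * discountedSum T g β x := by
  have hcg : ∀ y ∈ s, |c * g y| ≤ |c| * N := fun y hy ↦ by
    rw [abs_mul]
    exact mul_le_mul_of_nonneg_left (hg y hy) (abs_nonneg c)
  rw [discountedSum_sub hβ hT hf hcg hx]
  simp only [discountedSum, mul_div_assoc, tsum_mul_left]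

theorem discountedSum_comp (T : X → X) (g : X → ℝ) (β : ℝ) (x : X) :
    discountedSum T (fun y ↦ g (T y)) β x = discountedSum T g β (T x) := by
  simp only [discountedSum, ← iterate_succ_apply' T, iterate_succ_apply]

theorem discountedSum_eq_add (hβ : 1 < β) (hT : MapsTo T s s) (hg : ∀ y ∈ s, |g y| ≤ M)
    (hx : x ∈ s) : discountedSum T g β x = g x + discountedSum T g β (T x) / β := by
  rw [discountedSum, (summable_iterate_div_pow hβ hT hg hx).tsum_eq_zero_add]
  simp only [discountedSum, iterate_zero, id, pow_zero, div_one, iterate_succ_apply, pow_succ,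
    ← div_div, tsum_div_const]

theorem le_discountedSum (hβ : 1 < β) (hT : MapsTo T s s) (hg₀ : ∀ y ∈ s, 0 ≤ g y)
    (hg : ∀ y ∈ s, |g y| ≤ M) (hx : x ∈ s) : g x ≤ discountedSum T g β x := by
  have hβ₀ : 0 ≤ β := by linarith
  rw [discountedSum_eq_add hβ hT hg hx]
  exact le_add_of_nonneg_right (div_nonneg (discountedSum_nonneg hβ₀ hT hg₀ (hT hx)) hβ₀)

theorem discountedSum_eq_zero_of_isFixedPt (hx : IsFixedPt T x) (hg : g x = 0) (β : ℝ) :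
    discountedSum T g β x = 0 := by
  simp only [discountedSum, (hx.iterate _).eq, hg, zero_div, tsum_zero]

theorem discountedSum_eq_add_discountedSum_sub {T' : X → X} {Ψ : X → ℝ} {β' : ℝ} (hβ' : 1 < β')
    (hT : MapsTo T s s) (hT' : MapsTo T' s s) (hΨ : ∀ y ∈ s, |Ψ y| ≤ M)
    (hΨg : ∀ y ∈ s, Ψ y = g y + Ψ (T y) / β) (hx : x ∈ s) :
    discountedSum T' g β' x =
      Ψ x + discountedSum T' (fun y ↦ Ψ (T' y) / β' - Ψ (T y) / β) β' x := by
  have hΨT : ∀ y ∈ s, |Ψ (T y)| ≤ M := fun y hy ↦ hΨ _ (hT hy)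
  have hΨT' : ∀ y ∈ s, |Ψ (T' y) / β'| ≤ M / |β'| := fun y hy ↦ by
    rw [abs_div]
    exact div_le_div_of_nonneg_right (hΨ _ (hT' hy)) (abs_nonneg _)
  have hg : EqOn g (fun y ↦ Ψ y - β⁻¹ * Ψ (T y)) s := fun y hy ↦ by
    linear_combination -hΨg y hy
  have hcomp : discountedSum T' (fun y ↦ Ψ (T' y) / β') β' x =
      discountedSum T' Ψ β' (T' x) / β' := by
    rw [← discountedSum_comp]
    simp only [discountedSum, div_right_comm _ β', tsum_div_const]
  simp only [div_eq_inv_mul _ β]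
  rw [discountedSum_congr hT' hg hx, discountedSum_sub_const_mul hβ' hT' hΨ hΨT hx,
    discountedSum_sub_const_mul hβ' hT' hΨT' hΨT hx, hcomp, discountedSum_eq_add hβ' hT' hΨ hx]
  ring

end DiscountedSum

/-- The β-map `T_β(x) = βx mod 1`. -/
noncomputable def betaMap (β x : ℝ) : ℝ :=
  Int.fract (β * x)

theorem mapsTo_betaMap (β : ℝ) (s : Set ℝ) : MapsTo (betaMap β) s (Icc 0 1) :=
  fun _ _ ↦ unitInterval.fract_mem _

theorem betaOrbit_eq_iterate (β : ℝ) (n : ℕ) : betaOrbit β n = (betaMap β)^[n] 1 := by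
  induction n with
  | zero => rfl
  | succ n ih => rw [iterate_succ_apply', ← ih, betaMap, betaOrbit]

section Modulus

variable {Ψ : ℝ → ℝ}

theorem abs_comp_fract_sub_le {A R : ℝ} (hA : 0 ≤ A) (h₀₁ : Ψ 0 = Ψ 1)
    (hΨ : ∀ s ∈ Icc (0 : ℝ) 1, ∀ t ∈ Icc (0 : ℝ) 1, |Ψ t - Ψ s| ≤ A * |t - s| + R) (x y : ℝ) :
    |Ψ (Int.fract y) - Ψ (Int.fract x)| ≤ A * |y - x| + 2 * R := by
  wlog hxy : x ≤ y generalizing x y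
  · rw [abs_sub_comm, abs_sub_comm y]
    exact this y x (le_of_not_ge hxy)
  have hR : 0 ≤ R := by simpa using hΨ 0 (by simp) 0 (by simp)
  have hx : Int.fract x ∈ Icc (0 : ℝ) 1 := unitInterval.fract_mem x
  have hy : Int.fract y ∈ Icc (0 : ℝ) 1 := unitInterval.fract_mem y
  have hxfloor := Int.floor_add_fract x
  have hyfloor := Int.floor_add_fract y
  rw [abs_of_nonneg (sub_nonneg.2 hxy)]
  rcases le_or_gt (Int.fract x) (Int.fract y) with hfract | hfract
  · have hfloor : (⌊x⌋ : ℝ) ≤ ⌊y⌋ := mod_cast Int.floor_mono hxy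
    calc |Ψ (Int.fract y) - Ψ (Int.fract x)|
        ≤ A * (Int.fract y - Int.fract x) + R := by
          simpa only [abs_of_nonneg (sub_nonneg.2 hfract)] using hΨ _ hx _ hy
      _ ≤ A * (y - x) + 2 * R := by gcongr ?_ * ?_ + ?_ <;> linarith
  · have hfloor : (⌊x⌋ : ℝ) + 1 ≤ ⌊y⌋ := by
      have : (⌊x⌋ : ℝ) < ⌊y⌋ := by linarith
      exact_mod_cast this
    calc |Ψ (Int.fract y) - Ψ (Int.fract x)|
        ≤ |Ψ (Int.fract y) - Ψ 0| + |Ψ 1 - Ψ (Int.fract x)| := by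
          rw [h₀₁]
          exact abs_sub_le _ _ _
      _ ≤ (A * (Int.fract y - 0) + R) + (A * (1 - Int.fract x) + R) := by
          simpa only [abs_of_nonneg (sub_nonneg.2 hy.1), abs_of_nonneg (sub_nonneg.2 hx.2)] using
            add_le_add (hΨ 0 (by simp) _ hy) (hΨ _ hx 1 (by simp))
      _ = A * (Int.fract y - Int.fract x + 1) + 2 * R := by ring
      _ ≤ A * (y - x) + 2 * R := by gcongr; linarith

variable {g : ℝ → ℝ} {β C : ℝ} {L : NNReal}

theorem abs_comp_fract_sub_le_nat_mul_add_pow (hβ : 0 < β)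
    (hg : LipschitzOnWith L g (Icc 0 1)) (h₀₁ : Ψ 0 = Ψ 1)
    (hΨg : ∀ t ∈ Icc (0 : ℝ) 1, Ψ t = g t + Ψ (betaMap β t) / β)
    (hC : ∀ s ∈ Icc (0 : ℝ) 1, ∀ t ∈ Icc (0 : ℝ) 1, |Ψ t - Ψ s| ≤ C) (n : ℕ) (x y : ℝ) :
    |Ψ (Int.fract y) - Ψ (Int.fract x)| ≤ n * L * |y - x| + C * (2 / β) ^ n := by
  induction n generalizing x y with
  | zero => simpa using hC _ (unitInterval.fract_mem x) _ (unitInterval.fract_mem y)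
  | succ n ih =>
    have hcell : ∀ s ∈ Icc (0 : ℝ) 1, ∀ t ∈ Icc (0 : ℝ) 1,
        |Ψ t - Ψ s| ≤ (n + 1) * L * |t - s| + C * (2 / β) ^ n / β := fun s hs t ht ↦
      calc |Ψ t - Ψ s|
          = |(g t - g s) + (Ψ (betaMap β t) - Ψ (betaMap β s)) / β| := by
            rw [hΨg t ht, hΨg s hs]
            ring_nf
        _ ≤ |g t - g s| + |Ψ (betaMap β t) - Ψ (betaMap β s)| / β := by
            simpa only [abs_div, abs_of_pos hβ] using
              abs_add_le (g t - g s) ((Ψ (betaMap β t) - Ψ (betaMap β s)) / β)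
        _ ≤ L * |t - s| + (n * L * |β * t - β * s| + C * (2 / β) ^ n) / β := by
            gcongr
            · exact hg.dist_le_mul t ht s hs
            · exact ih (β * s) (β * t)
        _ = (n + 1) * L * |t - s| + C * (2 / β) ^ n / β := by
            rw [← mul_sub, abs_mul, abs_of_pos hβ]
            field_simp
            ring
    calc |Ψ (Int.fract y) - Ψ (Int.fract x)|
        ≤ (n + 1) * L * |y - x| + 2 * (C * (2 / β) ^ n / β) :=
          abs_comp_fract_sub_le (by positivity) h₀₁ hcell x y
      _ = (n + 1 : ℕ) * L * |y - x| + C * (2 / β) ^ (n + 1) := by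
          push_cast
          ring

theorem exists_nat_le_and_inv_pow_le {b δ : ℝ} (hb : 1 < b) (hδ : 0 < δ) :
    ∃ n : ℕ, n ≤ |log δ| / log b + 1 ∧ b⁻¹ ^ n ≤ δ := by
  have hlog : 0 < log b := log_pos hb
  refine ⟨⌈|log δ| / log b⌉₊, (Nat.ceil_lt_add_one (by positivity)).le, ?_⟩
  have hn : |log δ| ≤ ⌈|log δ| / log b⌉₊ * log b := (div_le_iff₀ hlog).1 (Nat.le_ceil _)
  rw [← log_le_log_iff (by positivity) hδ, log_pow, log_inv]
  linarith [neg_abs_le (log δ)]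

theorem abs_comp_fract_sub_le_mul_log (hβ : 2 < β)
    (hg : LipschitzOnWith L g (Icc 0 1)) (h₀₁ : Ψ 0 = Ψ 1)
    (hΨg : ∀ t ∈ Icc (0 : ℝ) 1, Ψ t = g t + Ψ (betaMap β t) / β)
    (hC : ∀ s ∈ Icc (0 : ℝ) 1, ∀ t ∈ Icc (0 : ℝ) 1, |Ψ t - Ψ s| ≤ C) {δ : ℝ} (hδ : 0 < δ)
    {x y : ℝ} (hxy : |y - x| ≤ δ) :
    |Ψ (Int.fract y) - Ψ (Int.fract x)| ≤ ((|log δ| / log (β / 2) + 1) * L + C) * δ := by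
  have hC₀ : 0 ≤ C := by simpa using hC 0 (by simp) 0 (by simp)
  obtain ⟨n, hn, hpow⟩ := exists_nat_le_and_inv_pow_le ((one_lt_div two_pos).2 hβ) hδ
  rw [inv_div] at hpow
  have hlog : 0 < log (β / 2) := log_pos ((one_lt_div two_pos).2 hβ)
  calc |Ψ (Int.fract y) - Ψ (Int.fract x)|
      ≤ n * L * |y - x| + C * (2 / β) ^ n :=
        abs_comp_fract_sub_le_nat_mul_add_pow (by linarith) hg h₀₁ hΨg hC n x y
    _ ≤ (|log δ| / log (β / 2) + 1) * L * δ + C * δ := by gcongr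
    _ = ((|log δ| / log (β / 2) + 1) * L + C) * δ := by ring

end Modulus

/-- The primitive `t ↦ ∫₀ᵗ (x - c) dx`; its discounted sum along the orbit of `1` is the integral
of `x - c` against the Parry density. -/
noncomputable def centeredPrimitive (c t : ℝ) : ℝ :=
  t ^ 2 / 2 - c * t

theorem lipschitzOnWith_centeredPrimitive {c : ℝ} (hc : c ∈ Icc (0 : ℝ) 1) :
    LipschitzOnWith 1 (centeredPrimitive c) (Icc 0 1) := by
  refine LipschitzOnWith.of_dist_le_mul fun t ht s hs ↦ ?_
  have hslope : |(t + s) / 2 - c| ≤ 1 :=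
    abs_le.2 ⟨by linarith [ht.1, hs.1, hc.2], by linarith [ht.2, hs.2, hc.1]⟩
  calc |centeredPrimitive c t - centeredPrimitive c s|
      = |(t + s) / 2 - c| * |t - s| := by
        rw [← abs_mul, centeredPrimitive, centeredPrimitive]
        ring_nf
    _ ≤ 1 * |t - s| := by gcongr

theorem abs_centeredPrimitive_le_one {c t : ℝ} (hc : c ∈ Icc (0 : ℝ) 1) (ht : t ∈ Icc (0 : ℝ) 1) :
    |centeredPrimitive c t| ≤ 1 := by
  have h := (lipschitzOnWith_centeredPrimitive hc).dist_le_mul t ht 0 (by simp)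
  simp only [centeredPrimitive, Real.dist_eq, NNReal.coe_one, one_mul, sub_zero, mul_zero, ne_eq,
    OfNat.ofNat_ne_zero, not_false_eq_true, zero_pow, zero_div, abs_of_nonneg ht.1] at h
  exact h.trans ht.2

section Expectation

variable {β β' : ℝ}

theorem Ebeta_eq_div (β : ℝ) : Ebeta β =
    discountedSum (betaMap β) (fun t ↦ t ^ 2 / 2) β 1 /
      discountedSum (betaMap β) (fun t ↦ t) β 1 := by
  simp only [Ebeta, discountedSum, betaOrbit_eq_iterate, div_div]

theorem abs_le_one_of_mem_Icc {t : ℝ} (ht : t ∈ Icc (0 : ℝ) 1) : |t| ≤ 1 :=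
  abs_le.2 ⟨by linarith [ht.1], ht.2⟩

theorem abs_sq_div_two_le_one {t : ℝ} (ht : t ∈ Icc (0 : ℝ) 1) : |t ^ 2 / 2| ≤ 1 := by
  rw [abs_of_nonneg (by positivity)]
  linarith [pow_le_one₀ ht.1 ht.2 (n := 2)]

theorem one_le_discountedSum_betaMap (hβ : 1 < β) :
    1 ≤ discountedSum (betaMap β) (fun t ↦ t) β 1 :=
  le_discountedSum (g := fun t ↦ t) hβ (mapsTo_betaMap β _) (fun _ ht ↦ ht.1)
    (fun _ ↦ abs_le_one_of_mem_Icc) (right_mem_Icc.2 zero_le_one)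

theorem discountedSum_centeredPrimitive (hβ : 1 < β) (c : ℝ) :
    discountedSum (betaMap β) (centeredPrimitive c) β 1 =
      (Ebeta β - c) * discountedSum (betaMap β) (fun t ↦ t) β 1 := by
  have hmass := one_le_discountedSum_betaMap hβ
  rw [Ebeta_eq_div, sub_mul, div_mul_cancel₀ _ (by linarith)]
  exact discountedSum_sub_const_mul hβ (mapsTo_betaMap β _) (fun _ ↦ abs_sq_div_two_le_one)
    (fun _ ↦ abs_le_one_of_mem_Icc) (right_mem_Icc.2 zero_le_one) c

theorem Ebeta_mem_Icc (hβ : 1 < β) : Ebeta β ∈ Icc (0 : ℝ) 1 := by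
  have hβ₀ : 0 ≤ β := by linarith
  have hone : (1 : ℝ) ∈ Icc (0 : ℝ) 1 := right_mem_Icc.2 zero_le_one
  have hmass := one_le_discountedSum_betaMap hβ
  have hmoment : discountedSum (betaMap β) (fun t ↦ t ^ 2 / 2) β 1 ≤
      discountedSum (betaMap β) (fun t ↦ t) β 1 := by
    rw [← sub_nonneg, ← discountedSum_sub hβ (mapsTo_betaMap β _)
      (fun _ ↦ abs_le_one_of_mem_Icc) (fun _ ↦ abs_sq_div_two_le_one) hone]
    refine discountedSum_nonneg hβ₀ (mapsTo_betaMap β _) (fun t ht ↦ ?_) hone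
    nlinarith [ht.1, ht.2]
  rw [Ebeta_eq_div]
  refine ⟨div_nonneg ?_ (by linarith), div_le_one_of_le₀ hmoment (by linarith)⟩
  exact discountedSum_nonneg hβ₀ (mapsTo_betaMap β _) (fun t _ ↦ by positivity) hone

/-- The function `Ψ_β` solving `Ψ = q + β⁻¹ Ψ ∘ T_β` on `[0, 1]`, where `q` is the primitive of
`x - E(β)` vanishing at `0`. -/
noncomputable def poissonSolution (β : ℝ) : ℝ → ℝ :=
  discountedSum (betaMap β) (centeredPrimitive (Ebeta β)) β

theorem poissonSolution_eq_add (hβ : 1 < β) {t : ℝ} (ht : t ∈ Icc (0 : ℝ) 1) :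
    poissonSolution β t =
      centeredPrimitive (Ebeta β) t + poissonSolution β (betaMap β t) / β :=
  discountedSum_eq_add hβ (mapsTo_betaMap β _)
    (fun _ ↦ abs_centeredPrimitive_le_one (Ebeta_mem_Icc hβ)) ht

theorem abs_poissonSolution_le_two (hβ : 2 ≤ β) {t : ℝ} (ht : t ∈ Icc (0 : ℝ) 1) :
    |poissonSolution β t| ≤ 2 := by
  have hc : Ebeta β ∈ Icc (0 : ℝ) 1 := Ebeta_mem_Icc (by linarith)
  calc |poissonSolution β t| ≤ 2 * 1 :=
        abs_discountedSum_le_two_mul hβ (mapsTo_betaMap β _)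
          (fun _ ↦ abs_centeredPrimitive_le_one hc) ht
    _ = 2 := mul_one 2

theorem poissonSolution_zero (β : ℝ) : poissonSolution β 0 = 0 :=
  discountedSum_eq_zero_of_isFixedPt (by simp [IsFixedPt, betaMap])
    (by simp [centeredPrimitive]) β

theorem poissonSolution_one (hβ : 1 < β) : poissonSolution β 1 = 0 := by
  rw [poissonSolution, discountedSum_centeredPrimitive hβ, sub_self, zero_mul]

theorem abs_poissonSolution_fract_sub_le (hβ : 2 < β) {δ : ℝ} (hδ : 0 < δ) {x y : ℝ}
    (hxy : |y - x| ≤ δ) :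
    |poissonSolution β (Int.fract y) - poissonSolution β (Int.fract x)| ≤
      (5 + |log δ| / log (β / 2)) * δ := by
  have hβ₁ : 1 < β := by linarith
  have hosc : ∀ s ∈ Icc (0 : ℝ) 1, ∀ t ∈ Icc (0 : ℝ) 1,
      |poissonSolution β t - poissonSolution β s| ≤ 4 := fun s hs t ht ↦ by
    linarith [abs_sub (poissonSolution β t) (poissonSolution β s),
      abs_poissonSolution_le_two hβ.le hs, abs_poissonSolution_le_two hβ.le ht]
  have h := abs_comp_fract_sub_le_mul_log hβ
    (lipschitzOnWith_centeredPrimitive (Ebeta_mem_Icc hβ₁))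
    ((poissonSolution_zero β).trans (poissonSolution_one hβ₁).symm)
    (fun _ ↦ poissonSolution_eq_add hβ₁) hosc hδ hxy
  rw [NNReal.coe_one] at h
  linarith

theorem Ebeta_sub_mul_eq_discountedSum (hβ : 2 ≤ β) (hβ' : 1 < β') :
    (Ebeta β' - Ebeta β) * discountedSum (betaMap β') (fun t ↦ t) β' 1 =
      discountedSum (betaMap β') (fun t ↦
        poissonSolution β (betaMap β' t) / β' - poissonSolution β (betaMap β t) / β) β' 1 := by
  have hβ₁ : 1 < β := by linarith
  rw [← discountedSum_centeredPrimitive hβ',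
    discountedSum_eq_add_discountedSum_sub hβ' (mapsTo_betaMap β _) (mapsTo_betaMap β' _)
      (fun _ ↦ abs_poissonSolution_le_two hβ) (fun _ ↦ poissonSolution_eq_add hβ₁)
      (right_mem_Icc.2 zero_le_one),
    poissonSolution_one hβ₁, zero_add]

theorem abs_poissonSolution_div_sub_le (hβ : 2 < β) (hβ' : 2 ≤ β') (hne : β' ≠ β) {t : ℝ}
    (ht : t ∈ Icc (0 : ℝ) 1) :
    |poissonSolution β (betaMap β' t) / β' - poissonSolution β (betaMap β t) / β| ≤
      (3 + |log (|β' - β|)| / (2 * log (β / 2))) * |β' - β| := by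
  set δ := |β' - β|
  set u := poissonSolution β (betaMap β' t)
  set v := poissonSolution β (betaMap β t)
  have hδ : 0 < δ := abs_pos.2 (sub_ne_zero.2 hne)
  have hshift : |β' * t - β * t| ≤ δ := by
    rw [← sub_mul, abs_mul]
    exact mul_le_of_le_one_right hδ.le (abs_le_one_of_mem_Icc ht)
  have huv : |u - v| ≤ (5 + |log δ| / log (β / 2)) * δ :=
    abs_poissonSolution_fract_sub_le hβ hδ hshift
  have hv : |v| ≤ 2 := abs_poissonSolution_le_two hβ.le (mapsTo_betaMap β (Icc 0 1) ht)
  have hinv : |β'⁻¹ - β⁻¹| ≤ δ / 4 := by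
    rw [inv_sub_inv (by linarith) (by linarith), abs_div, abs_sub_comm,
      abs_of_pos (show 0 < β' * β by positivity)]
    gcongr
    nlinarith
  calc |u / β' - v / β| = |(u - v) / β' + v * (β'⁻¹ - β⁻¹)| := by ring_nf
    _ ≤ |u - v| / β' + |v| * |β'⁻¹ - β⁻¹| := by
        simpa only [abs_div, abs_mul, abs_of_nonneg (show 0 ≤ β' by linarith)] using
          abs_add_le ((u - v) / β') (v * (β'⁻¹ - β⁻¹))
    _ ≤ ((5 + |log δ| / log (β / 2)) * δ) / 2 + 2 * (δ / 4) := by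
        gcongr
        exact (abs_nonneg _).trans huv
    _ = (3 + |log δ| / (2 * log (β / 2))) * δ := by ring

theorem abs_Ebeta_sub_le (hβ : 2 < β) (hβ' : 2 ≤ β') :
    |Ebeta β' - Ebeta β| ≤ (6 + |log (|β' - β|)| / log (β / 2)) * |β' - β| := by
  rcases eq_or_ne β' β with rfl | hne
  · simp
  set D := discountedSum (betaMap β') (fun t ↦ t) β' 1
  have hD : 1 ≤ D := one_le_discountedSum_betaMap (by linarith)
  calc |Ebeta β' - Ebeta β| ≤ |Ebeta β' - Ebeta β| * D :=
        le_mul_of_one_le_right (abs_nonneg _) hD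
    _ = |(Ebeta β' - Ebeta β) * D| := by rw [abs_mul, abs_of_pos (a := D) (by linarith)]
    _ ≤ 2 * ((3 + |log (|β' - β|)| / (2 * log (β / 2))) * |β' - β|) := by
        rw [Ebeta_sub_mul_eq_discountedSum hβ.le (by linarith)]
        exact abs_discountedSum_le_two_mul hβ' (mapsTo_betaMap β' _)
          (fun _ ↦ abs_poissonSolution_div_sub_le hβ hβ' hne) (right_mem_Icc.2 zero_le_one)
    _ = (6 + |log (|β' - β|)| / log (β / 2)) * |β' - β| := by ring

end Expectation

theorem stmt4_general (a : ℝ) (ha : 2 < a) :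
    ∃ K > (0 : ℝ), ∀ β ≥ a, ∀ β' ≥ (2 : ℝ),
      |Ebeta β - Ebeta β'| ≤ K * |β - β'| * (1 + |log (|β - β'|)|) := by
  have hlog : 0 < log (a / 2) := log_pos ((one_lt_div two_pos).2 ha)
  refine ⟨6 + 1 / log (a / 2), by positivity, fun β hβ β' hβ' ↦ ?_⟩
  rw [abs_sub_comm, abs_sub_comm β]
  set δ := |β' - β|
  calc |Ebeta β' - Ebeta β| ≤ (6 + |log δ| / log (β / 2)) * δ :=
        abs_Ebeta_sub_le (ha.trans_le hβ) hβ'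
    _ ≤ (6 + |log δ| / log (a / 2)) * δ := by gcongr
    _ ≤ (6 + |log δ| / log (a / 2)) * δ + (6 * |log δ| + 1 / log (a / 2)) * δ :=
        le_add_of_nonneg_right (by positivity)
    _ = (6 + 1 / log (a / 2)) * δ * (1 + |log δ|) := by ring

/-- Log-Lipschitz continuity of `β ↦ E(β)` on compact subintervals of `(2,∞)`. -/
theorem stmt4 (a₀ a₁ : ℝ) (h₀ : 2 < a₀) (h₁ : a₀ ≤ a₁) :
    ∃ K > (0:ℝ), ∀ β ∈ Set.Icc a₀ a₁, ∀ β' ∈ Set.Icc a₀ a₁, β ≠ β' →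
      |Ebeta β - Ebeta β'| ≤ K * |β - β'| * (1 + |Real.log (|β - β'|)|) := by
  obtain ⟨K, hK, h⟩ := stmt4_general a₀ h₀
  exact ⟨K, hK, fun β hβ β' hβ' _ ↦ h β hβ.1 β' (h₀.le.trans hβ'.1)⟩
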